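/- Let h > 0, b_0 > 0, and let u_0 : [0, ∞) → ℝ satisfy u_0(0) > 0 and u_0(η) ≥ u_0(0) − M·η for all η ∈ [0, b_0], where M > 0. Fix 0 < h̃ ≤ h. Then there exists Λ > 1 such that for all λ ≥ Λ: b_λ < min(b_0, u_0(0)/M), U_λ(0) < u_0(0), and U_λ(η) ≤ u_0(η) for all η ∈ [0, b_λ]; in particular, for such λ the time-independent pair (U_λ, b_λ) is a lower solution of problem (2.1) with data (h, u_0, b_0). -/

import Mathlib

/-- A time-independent pair `(W, b)` is a lower solution of problem (2.1) with
data `(h, u0, b0)`: `-(W'' + (η/2) W') ≤ 0` on `(0, b)`, `-W'(0) ≤ h`,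
`W b = 0`, `b/2 ≤ -W'(b)`, `b ≤ b0`, and `W ≤ u0` on `[0, b]`. -/
def IsTIStatLowerSol (h b0 : ℝ) (u0 : ℝ → ℝ) (W : ℝ → ℝ) (b : ℝ) : Prop :=
  (∀ η ∈ Set.Ioo 0 b, -(deriv (deriv W) η + η / 2 * deriv W η) ≤ 0) ∧
  (-deriv W 0 ≤ h) ∧ (W b = 0) ∧ (b / 2 ≤ -deriv W b) ∧ (b ≤ b0) ∧
  (∀ η ∈ Set.Icc 0 b, W η ≤ u0 η)

/-!
Since `exp (-λ s² / 4) ≤ 1`, the slope of `U_λ` is at least `-h̃`, so `U_λ` lies below the segment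
joining `(0, h̃ b_λ)` to `(b_λ, 0)`. The affine minorant `u₀(0) - M η` lies above that segment on
`[0, b_λ]` as soon as it does so at both ends, that is, when `h̃ b_λ` and `M b_λ` are at most
`u₀(0)`. This holds for large `λ`, because `exp x > x` in the equation for `b_λ` gives
`λ b_λ³ < 8 h̃` and hence `b_λ → 0`. The differential inequality follows from
`U_λ'' = -(λ η / 2) U_λ'` with `U_λ' ≤ 0` and `λ ≥ 1`.
-/

open Filter Topology

/-- The relation between `h̃`, `λ` and `b` saying that `b` is the free boundary `b_λ` of the
perturbed stationary problem (2.6). -/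
def IsPerturbedBoundary (htil lam b : ℝ) : Prop :=
  0 < b ∧ htil = b / 2 * Real.exp (lam * b ^ 2 / 4)

/-- The profile `U_λ` of the perturbed stationary problem (2.6). The endpoint `b` is a free
parameter, equal to `b_λ` under `IsPerturbedBoundary htil lam b`. -/
noncomputable def perturbedProfile (htil lam b η : ℝ) : ℝ :=
  htil * ∫ s in η..b, Real.exp (-(lam * s ^ 2) / 4)

section Profile

variable {htil lam b : ℝ}

theorem perturbedProfile_self : perturbedProfile htil lam b b = 0 := by
  simp [perturbedProfile]

theorem hasDerivAt_perturbedProfile (η : ℝ) :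
    HasDerivAt (perturbedProfile htil lam b) (-(htil * Real.exp (-(lam * η ^ 2) / 4))) η := by
  have hcont : Continuous fun s : ℝ => Real.exp (-(lam * s ^ 2) / 4) := by fun_prop
  rw [← mul_neg]
  exact (intervalIntegral.integral_hasDerivAt_left (hcont.intervalIntegrable η b)
    (hcont.stronglyMeasurableAtFilter _ _) hcont.continuousAt).const_mul htil

theorem deriv_perturbedProfile :
    deriv (perturbedProfile htil lam b) = fun η => -(htil * Real.exp (-(lam * η ^ 2) / 4)) :=
  funext fun η => (hasDerivAt_perturbedProfile η).deriv

theorem deriv_perturbedProfile_nonpos (hhtil : 0 ≤ htil) (η : ℝ) :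
    deriv (perturbedProfile htil lam b) η ≤ 0 := by
  rw [deriv_perturbedProfile]
  exact neg_nonpos.2 (by positivity)

theorem deriv_deriv_perturbedProfile (η : ℝ) :
    deriv (deriv (perturbedProfile htil lam b)) η =
      -(lam * η / 2) * deriv (perturbedProfile htil lam b) η := by
  have hexponent : HasDerivAt (fun η : ℝ => -(lam * η ^ 2) / 4) (-(lam * η / 2)) η :=
    (((hasDerivAt_pow 2 η).const_mul lam).neg.div_const 4).congr_deriv (by norm_num; ring)
  rw [deriv_perturbedProfile, (hexponent.exp.const_mul htil).fun_neg.deriv]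
  ring

theorem perturbedProfile_le_mul_sub (hhtil : 0 ≤ htil) (hlam : 0 ≤ lam) {η : ℝ} (hη : η ≤ b) :
    perturbedProfile htil lam b η ≤ htil * (b - η) := by
  have hexp_le_one (s : ℝ) : Real.exp (-(lam * s ^ 2) / 4) ≤ 1 :=
    Real.exp_le_one_iff.2 (by linarith [mul_nonneg hlam (sq_nonneg s)])
  have hintegral : ∫ s in η..b, Real.exp (-(lam * s ^ 2) / 4) ≤ ∫ _ in η..b, (1 : ℝ) :=
    intervalIntegral.integral_mono hη (Continuous.intervalIntegrable (by fun_prop) _ _)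
      intervalIntegrable_const hexp_le_one
  rw [integral_one] at hintegral
  exact mul_le_mul_of_nonneg_left hintegral hhtil

theorem perturbedProfile_le_of_affine_minorant (hhtil : 0 ≤ htil) (hlam : 0 ≤ lam)
    {M η : ℝ} {u0 : ℝ → ℝ} (hη : η ∈ Set.Icc 0 b) (hu0 : u0 0 - M * η ≤ u0 η)
    (hhtilb : htil * b ≤ u0 0) (hMb : M * b ≤ u0 0) :
    perturbedProfile htil lam b η ≤ u0 η := by
  obtain ⟨hη0, hηb⟩ := hη
  have hsegment : htil * (b - η) + M * η ≤ u0 0 :=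
    calc htil * (b - η) + M * η
        ≤ max htil M * (b - η) + max htil M * η := by
          gcongr
          exacts [le_max_left _ _, le_max_right _ _]
      _ = max (htil * b) (M * b) := by
          rw [← max_mul_of_nonneg _ _ (hη0.trans hηb)]
          ring
      _ ≤ u0 0 := max_le hhtilb hMb
  linarith [perturbedProfile_le_mul_sub hhtil hlam hηb]

end Profile

namespace IsPerturbedBoundary

variable {htil lam b : ℝ}

theorem flux_pos (hb : IsPerturbedBoundary htil lam b) : 0 < htil := by
  obtain ⟨hpos, rfl⟩ := hb
  positivity

theorem mul_cube_lt (hb : IsPerturbedBoundary htil lam b) : lam * b ^ 3 < 8 * htil := by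
  obtain ⟨hpos, hroot⟩ := hb
  have hexp : lam * b ^ 2 / 4 < Real.exp (lam * b ^ 2 / 4) :=
    (lt_add_one _).trans_le (Real.add_one_le_exp _)
  calc lam * b ^ 3 = 8 * (b / 2 * (lam * b ^ 2 / 4)) := by ring
    _ < 8 * (b / 2 * Real.exp (lam * b ^ 2 / 4)) := by gcongr
    _ = 8 * htil := by rw [← hroot]

theorem tendsto_zero {B : ℝ → ℝ} (hB : ∀ᶠ lam in atTop, IsPerturbedBoundary htil lam (B lam)) :
    Tendsto B atTop (𝓝 0) := by
  refine tendsto_order.2 ⟨fun a ha => hB.mono fun lam hb => ha.trans hb.1, fun δ hδ => ?_⟩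
  filter_upwards [hB, eventually_gt_atTop 0, eventually_ge_atTop (8 * htil / δ ^ 3)]
    with lam hb hlam hlarge
  have hcube : lam * B lam ^ 3 < lam * δ ^ 3 :=
    hb.mul_cube_lt.trans_le ((div_le_iff₀ (by positivity)).1 hlarge)
  exact lt_of_pow_lt_pow_left₀ 3 hδ.le (lt_of_mul_lt_mul_left hcube hlam.le)

theorem neg_deriv_perturbedProfile_self (hb : IsPerturbedBoundary htil lam b) :
    -deriv (perturbedProfile htil lam b) b = b / 2 := by
  rw [deriv_perturbedProfile, neg_neg, neg_div, Real.exp_neg, ← div_eq_mul_inv,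
    div_eq_iff (Real.exp_pos _).ne']
  exact hb.2

theorem isTIStatLowerSol (hb : IsPerturbedBoundary htil lam b) (hlam : 1 ≤ lam)
    {h b0 : ℝ} {u0 : ℝ → ℝ} (hhtilh : htil ≤ h) (hbb0 : b ≤ b0)
    (hle : ∀ η ∈ Set.Icc 0 b, perturbedProfile htil lam b η ≤ u0 η) :
    IsTIStatLowerSol h b0 u0 (perturbedProfile htil lam b) b := by
  refine ⟨fun η hη => ?_, ?_, perturbedProfile_self, hb.neg_deriv_perturbedProfile_self.ge,
    hbb0, hle⟩
  · have hcoeff : 0 ≤ (lam - 1) * (η / 2) :=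
      mul_nonneg (sub_nonneg.2 hlam) (half_pos hη.1).le
    calc -(deriv (deriv (perturbedProfile htil lam b)) η
          + η / 2 * deriv (perturbedProfile htil lam b) η)
        = (lam - 1) * (η / 2) * deriv (perturbedProfile htil lam b) η := by
          rw [deriv_deriv_perturbedProfile]
          ring
      _ ≤ 0 := mul_nonpos_of_nonneg_of_nonpos hcoeff
          (deriv_perturbedProfile_nonpos hb.flux_pos.le η)
  · simpa [deriv_perturbedProfile] using hhtilh

end IsPerturbedBoundary

/-- Lemma 2.6: for `0 < h̃ ≤ h`, `u0` with `u0 0 > 0` and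
`u0 η ≥ u0 0 - M η` on `[0, b0]`, there is `Λ > 1` such that for every
`λ ≥ Λ`: `b_λ < min b0 (u0 0 / M)`, `U_λ(0) < u0 0`, `U_λ ≤ u0` on `[0, b_λ]`,
and `(U_λ, b_λ)` is a time-independent lower solution of (2.1) with data
`(h, u0, b0)`. -/
theorem lower_solution_for_large_lambda
    (h b0 M htil : ℝ) (hh : 0 < h) (hb0 : 0 < b0) (hM : 0 < M)
    (u0 : ℝ → ℝ) (hu00 : 0 < u0 0)
    (hu0lin : ∀ η ∈ Set.Icc 0 b0, u0 0 - M * η ≤ u0 η)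
    (hhtil : 0 < htil) (hhtilh : htil ≤ h)
    (B : ℝ → ℝ)
    (hB : ∀ lam > (0:ℝ), 0 < B lam ∧
      htil = B lam / 2 * Real.exp (lam * B lam ^ 2 / 4)) :
    ∃ Λ : ℝ, 1 < Λ ∧ ∀ lam ≥ Λ,
      B lam < min b0 (u0 0 / M) ∧
      htil * (∫ s in (0:ℝ)..B lam, Real.exp (-(lam * s ^ 2) / 4)) < u0 0 ∧
      (∀ η ∈ Set.Icc 0 (B lam),
        htil * (∫ s in η..B lam, Real.exp (-(lam * s ^ 2) / 4)) ≤ u0 η) ∧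
      IsTIStatLowerSol h b0 u0
        (fun η => htil * ∫ s in η..B lam, Real.exp (-(lam * s ^ 2) / 4))
        (B lam) := by
  have hboundary : ∀ lam > 0, IsPerturbedBoundary htil lam (B lam) := hB
  have hB_zero : Tendsto B atTop (𝓝 0) :=
    IsPerturbedBoundary.tendsto_zero ((eventually_gt_atTop 0).mono hboundary)
  have hsmall : ∀ᶠ lam in atTop, B lam < b0 ∧ B lam < u0 0 / M ∧ B lam < u0 0 / htil :=
    (hB_zero.eventually_lt_const hb0).and
      ((hB_zero.eventually_lt_const (div_pos hu00 hM)).and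
        (hB_zero.eventually_lt_const (div_pos hu00 hhtil)))
  obtain ⟨Λ, hΛ⟩ := eventually_atTop.1 hsmall
  refine ⟨max Λ 2, lt_max_of_lt_right one_lt_two, fun lam hlam => ?_⟩
  obtain ⟨hlamΛ, hlam2⟩ := max_le_iff.1 hlam
  obtain ⟨hBb0, hBM, hBhtil⟩ := hΛ lam hlamΛ
  have hlam0 : 0 < lam := two_pos.trans_le hlam2
  have hb := hboundary lam hlam0
  have hhtilB : htil * B lam < u0 0 := (lt_div_iff₀' hhtil).1 hBhtil
  have hle : ∀ η ∈ Set.Icc 0 (B lam), perturbedProfile htil lam (B lam) η ≤ u0 η := fun η hη =>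
    perturbedProfile_le_of_affine_minorant hhtil.le hlam0.le hη
      (hu0lin η ⟨hη.1, hη.2.trans hBb0.le⟩) hhtilB.le ((lt_div_iff₀' hM).1 hBM).le
  have hzero : perturbedProfile htil lam (B lam) 0 < u0 0 :=
    (perturbedProfile_le_mul_sub hhtil.le hlam0.le hb.1.le).trans_lt (by rwa [sub_zero])
  exact ⟨lt_min hBb0 hBM, hzero, hle,
    hb.isTIStatLowerSol (one_le_two.trans hlam2) hhtilh hBb0.le hle⟩
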